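/- Let 2 ≤ s₀ ≤ s₁, let c ≥ 0, and let u be a twice continuously differentiable function on a neighborhood of the region R = {(t,x) : |x| ≤ t − 1, s₀² ≤ t² − x² ≤ s₁²}, and let f be continuous on R with ∂_t∂_t u − ∂_x∂_x u + c² u = f on R. For s ∈ [s₀, s₁] define the hyperboloidal energy E(s) := ∫_{|x| ≤ (s²−1)/2} ( (∂_t u)² + (∂_x u)² + 2 (x/√(s²+x²)) ∂_t u ∂_x u + c² u² ) evaluated at (√(s²+x²), x) dx, and the cone flux K(s) := ∫_{(s₀²+1)/2}^{(s²+1)/2} [ ( (∂̃₁u)² + c² u² )(t, t−1) + ( (∂̃₁u)² + c² u² )(t, −(t−1)) ] dt, where ∂̃₁u(t,x) = (x/|x|) ∂_t u + ∂_x u. Then for every s ∈ [s₀, s₁], E(s) ≤ E(s₀) + K(s) + 2 ∫_{s₀}^{s} E(τ)^{1/2} · ( ∫_{|x| ≤ (τ²−1)/2} f(√(τ²+x²), x)² dx )^{1/2} dτ. -/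

import Mathlib

open MeasureTheory

/-- Partial derivative in `t` of a function `u(t,x)`. -/
noncomputable def Dt (u : ℝ → ℝ → ℝ) : ℝ → ℝ → ℝ := fun t x => deriv (fun τ => u τ x) t

/-- Partial derivative in `x` of a function `u(t,x)`. -/
noncomputable def Dx (u : ℝ → ℝ → ℝ) : ℝ → ℝ → ℝ := fun t x => deriv (fun y => u t y) x

/-- The Lorentz boost `L u = x ∂_t u + t ∂_x u`. -/
noncomputable def Lop (u : ℝ → ℝ → ℝ) : ℝ → ℝ → ℝ := fun t x => x * Dt u t x + t * Dx u t x

/-- The 1+1-dimensional wave operator `□u = ∂_t∂_t u − ∂_x∂_x u`. -/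
noncomputable def Box (u : ℝ → ℝ → ℝ) : ℝ → ℝ → ℝ := fun t x => Dt (Dt u) t x - Dx (Dx u) t x

/-- The null derivative `∂̃₁ u = (x/|x|) ∂_t u + ∂_x u` (for `x ≠ 0`). -/
noncomputable def Nd (u : ℝ → ℝ → ℝ) : ℝ → ℝ → ℝ := fun t x => (x/|x|) * Dt u t x + Dx u t x

/-- The hyperboloidal energy
`E(s) = ∫_{|x|≤(s²−1)/2} ((∂_t u)² + (∂_x u)² + 2(x/√(s²+x²))∂_t u ∂_x u + c²u²)`
evaluated on the hyperboloid `t = √(s²+x²)`. -/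
noncomputable def hypEnergy (c : ℝ) (u : ℝ → ℝ → ℝ) (s : ℝ) : ℝ :=
  ∫ x in (-((s^2 - 1)/2))..((s^2 - 1)/2),
    ((Dt u (Real.sqrt (s^2 + x^2)) x)^2 + (Dx u (Real.sqrt (s^2 + x^2)) x)^2
      + 2 * (x / Real.sqrt (s^2 + x^2)) *
          Dt u (Real.sqrt (s^2 + x^2)) x * Dx u (Real.sqrt (s^2 + x^2)) x
      + c^2 * (u (Real.sqrt (s^2 + x^2)) x)^2)

/-- The flux along the cone `{t = |x| + 1}` between the hyperboloids of radii `s₀` and `s`. -/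
noncomputable def coneFlux (c : ℝ) (u : ℝ → ℝ → ℝ) (s₀ s : ℝ) : ℝ :=
  ∫ t in ((s₀^2 + 1)/2)..((s^2 + 1)/2),
    (((Nd u t (t - 1))^2 + c^2 * (u t (t - 1))^2)
      + ((Nd u t (-(t - 1)))^2 + c^2 * (u t (-(t - 1)))^2))

/-!
The one-form `ω = 2 ∂_t u ∂_x u dt + ((∂_t u)² + (∂_x u)² + c²u²) dx` satisfies
`dω = 2 ∂_t u (□u + c²u) dt ∧ dx`. The region between two hyperboloids is the image of a rectangle
under `(s, y) ↦ (√(s² + x²), x)`, `x = (s² - 1)/2 · y`; Stokes' theorem for the pull-back of `ω`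
expresses the difference of the energies of the two hyperboloids as the flux through the cone plus
`2 ∫ s ∫ (∂_t u / t) f dx ds`, since `dt ∧ dx = (s/t) ds ∧ dx`. On the hyperboloid of radius `s`
the energy density is `((s/t) ∂_t u)² + ((x/t) ∂_t u + ∂_x u)² + c²u²`, so the
Cauchy–Schwarz inequality bounds the inner integral, multiplied by `s`, by `E(s)^{1/2} ‖f‖`.
-/

open Set Function
open scoped Interval

section Integrals

theorem integral_mul_le_sqrt_mul_sqrt {α : Type*} [MeasurableSpace α] {μ : Measure α}
    {f g : α → ℝ} (hf : MemLp f 2 μ) (hg : MemLp g 2 μ) :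
    ∫ a, f a * g a ∂μ ≤ √(∫ a, f a ^ 2 ∂μ) * √(∫ a, g a ^ 2 ∂μ) := by
  have holder : ∫ a, ‖f a‖ * ‖g a‖ ∂μ ≤ √(∫ a, f a ^ 2 ∂μ) * √(∫ a, g a ^ 2 ∂μ) := by
    simpa only [Real.sqrt_eq_rpow, Real.rpow_ofNat, Real.norm_eq_abs, sq_abs] using
      integral_mul_norm_le_Lp_mul_Lq (E := ℝ) Real.HolderConjugate.two_two
        (by rwa [ENNReal.ofReal_ofNat]) (by rwa [ENNReal.ofReal_ofNat])
  calc ∫ a, f a * g a ∂μ ≤ ∫ a, ‖f a * g a‖ ∂μ :=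
        (Real.le_norm_self _).trans (norm_integral_le_integral_norm _)
    _ ≤ _ := by simpa only [norm_mul] using holder

theorem intervalIntegral_mul_le_sqrt_mul_sqrt {f g : ℝ → ℝ} {a b : ℝ} (hab : a ≤ b)
    (hf : ContinuousOn f (Icc a b)) (hg : ContinuousOn g (Icc a b)) :
    ∫ x in a..b, f x * g x ≤ √(∫ x in a..b, f x ^ 2) * √(∫ x in a..b, g x ^ 2) := by
  have memLp {h : ℝ → ℝ} (hh : ContinuousOn h (Icc a b)) :
      MemLp h 2 (volume.restrict (Ioc a b)) :=
    ((memLp_two_iff_integrable_sq (hh.aestronglyMeasurable measurableSet_Icc)).2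
      (hh.pow 2).integrableOn_Icc).mono_measure (Measure.restrict_mono_set _ Ioc_subset_Icc_self)
  simpa only [intervalIntegral.integral_of_le hab] using
    integral_mul_le_sqrt_mul_sqrt (memLp hf) (memLp hg)

theorem continuousOn_intervalIntegral {X E : Type*} [TopologicalSpace X]
    [NormedAddCommGroup E] [NormedSpace ℝ E] {F : X → ℝ → E} {S : Set X} {a b : ℝ}
    (hF : ContinuousOn (uncurry F) (S ×ˢ uIcc a b)) :
    ContinuousOn (fun x => ∫ y in a..b, F x y) S := by
  rw [continuousOn_iff_continuous_domRestrict]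
  have hproj : Continuous
      (uncurry fun (x : S) y => F x (projIcc (min a b) (max a b) min_le_max y)) :=
    hF.comp_continuous (f := fun z : S × ℝ => ((z.1 : X), (projIcc _ _ min_le_max z.2 : ℝ)))
      (by fun_prop) fun z => ⟨z.1.2, (projIcc _ _ min_le_max z.2).2⟩
  refine (intervalIntegral.continuous_parametric_intervalIntegral_of_continuous' (μ := volume)
    hproj a b).congr fun x => ?_
  refine intervalIntegral.integral_congr fun y hy => ?_
  simp only [projIcc_of_mem min_le_max hy]

end Integrals

section Stokes

variable {E F : Type*} [NormedAddCommGroup E] [NormedSpace ℝ E] [NormedAddCommGroup F]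
  [NormedSpace ℝ F]

theorem contDiffAt_pullback {ω : E → E →L[ℝ] F} {Φ : ℝ × ℝ → E} {z : ℝ × ℝ}
    (hω : ContDiffAt ℝ 1 ω (Φ z)) (hΦ : ContDiffAt ℝ 2 Φ z) (v : ℝ × ℝ) :
    ContDiffAt ℝ 1 (fun z => ω (Φ z) (fderiv ℝ Φ z v)) z :=
  (hω.comp z (hΦ.of_le one_le_two)).clm_apply
    ((hΦ.fderiv_right (by norm_num)).clm_apply contDiffAt_const)

-- The second derivatives of `Φ` cancel by symmetry.
theorem fderiv_pullback_sub_fderiv_pullback {ω : E → E →L[ℝ] F} {Φ : ℝ × ℝ → E} {z : ℝ × ℝ}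
    (hω : DifferentiableAt ℝ ω (Φ z)) (hΦ : ContDiffAt ℝ 2 Φ z) (v w : ℝ × ℝ) :
    fderiv ℝ (fun z => ω (Φ z) (fderiv ℝ Φ z w)) z v
        - fderiv ℝ (fun z => ω (Φ z) (fderiv ℝ Φ z v)) z w
      = fderiv ℝ ω (Φ z) (fderiv ℝ Φ z v) (fderiv ℝ Φ z w)
        - fderiv ℝ ω (Φ z) (fderiv ℝ Φ z w) (fderiv ℝ Φ z v) := by
  have hΦ' : DifferentiableAt ℝ (fderiv ℝ Φ) z :=
    (hΦ.fderiv_right (m := 1) (by norm_num)).differentiableAt one_ne_zero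
  have hωΦ := hω.hasFDerivAt.comp z (hΦ.differentiableAt two_ne_zero).hasFDerivAt
  have fderiv_pullback (a b : ℝ × ℝ) :
      fderiv ℝ (fun z => ω (Φ z) (fderiv ℝ Φ z a)) z b
        = ω (Φ z) (fderiv ℝ (fderiv ℝ Φ) z b a)
          + fderiv ℝ ω (Φ z) (fderiv ℝ Φ z b) (fderiv ℝ Φ z a) := by
    have h := hωΦ.clm_apply (hΦ'.hasFDerivAt.clm_apply (hasFDerivAt_const a z))
    simpa using DFunLike.congr_fun h.fderiv b
  have hsymm : fderiv ℝ (fderiv ℝ Φ) z v w = fderiv ℝ (fderiv ℝ Φ) z w v :=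
    hΦ.isSymmSndFDerivAt (by simp) v w
  rw [fderiv_pullback, fderiv_pullback, hsymm, add_sub_add_left_eq_sub]

theorem integral2_fderiv_pullback {ω : E → E →L[ℝ] F} {Φ : ℝ × ℝ → E}
    {a₁ b₁ a₂ b₂ : ℝ} (hω : ∀ z ∈ [[a₁, b₁]] ×ˢ [[a₂, b₂]], ContDiffAt ℝ 1 ω (Φ z))
    (hΦ : ∀ z ∈ [[a₁, b₁]] ×ˢ [[a₂, b₂]], ContDiffAt ℝ 2 Φ z) :
    (∫ s in a₁..b₁, ∫ y in a₂..b₂,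
        (fderiv ℝ ω (Φ (s, y)) (fderiv ℝ Φ (s, y) (1, 0)) (fderiv ℝ Φ (s, y) (0, 1))
          - fderiv ℝ ω (Φ (s, y)) (fderiv ℝ Φ (s, y) (0, 1)) (fderiv ℝ Φ (s, y) (1, 0))))
      = ((∫ y in a₂..b₂, ω (Φ (b₁, y)) (fderiv ℝ Φ (b₁, y) (0, 1)))
          - ∫ y in a₂..b₂, ω (Φ (a₁, y)) (fderiv ℝ Φ (a₁, y) (0, 1)))
        - ((∫ s in a₁..b₁, ω (Φ (s, b₂)) (fderiv ℝ Φ (s, b₂) (1, 0)))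
          - ∫ s in a₁..b₁, ω (Φ (s, a₂)) (fderiv ℝ Φ (s, a₂) (1, 0))) := by
  let f (v z : ℝ × ℝ) : F := ω (Φ z) (fderiv ℝ Φ z v)
  have hf (v : ℝ × ℝ) : ∀ z ∈ [[a₁, b₁]] ×ˢ [[a₂, b₂]], ContDiffAt ℝ 1 (f v) z :=
    fun z hz => contDiffAt_pullback (hω z hz) (hΦ z hz) v
  have hf_fderiv (v : ℝ × ℝ) : ∀ z ∈ [[a₁, b₁]] ×ˢ [[a₂, b₂]],
      HasFDerivAt (f v) (fderiv ℝ (f v) z) z :=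
    fun z hz => ((hf v z hz).differentiableAt one_ne_zero).hasFDerivAt
  have hf_cont (v : ℝ × ℝ) : ContinuousOn (f v) ([[a₁, b₁]] ×ˢ [[a₂, b₂]]) :=
    fun z hz => (hf v z hz).continuousAt.continuousWithinAt
  have hf'_cont (v w : ℝ × ℝ) :
      ContinuousOn (fun z => fderiv ℝ (f v) z w) ([[a₁, b₁]] ×ˢ [[a₂, b₂]]) :=
    fun z hz => (((hf v z hz).fderiv_right (m := 0) (by norm_num)).continuousAt.clm_apply
      continuousAt_const).continuousWithinAt
  have Ioo_subset : Ioo (min a₁ b₁) (max a₁ b₁) ×ˢ Ioo (min a₂ b₂) (max a₂ b₂)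
      ⊆ [[a₁, b₁]] ×ˢ [[a₂, b₂]] := prod_mono Ioo_subset_Icc_self Ioo_subset_Icc_self
  have green := integral2_divergence_prod_of_hasFDerivAt (f (0, 1)) (fun z => -f (1, 0) z)
    (fderiv ℝ (f (0, 1))) (fun z => -fderiv ℝ (f (1, 0)) z) a₁ a₂ b₁ b₂
    (hf_cont _) (hf_cont _).neg (fun z hz => hf_fderiv _ z (Ioo_subset hz))
    (fun z hz => (hf_fderiv _ z (Ioo_subset hz)).neg)
    (((hf'_cont _ _).add (hf'_cont _ _).neg).integrableOn_compact
      (isCompact_uIcc.prod isCompact_uIcc))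
  calc _ = ∫ s in a₁..b₁, ∫ y in a₂..b₂,
        (fderiv ℝ (f (0, 1)) (s, y) (1, 0) + (-fderiv ℝ (f (1, 0)) (s, y)) (0, 1)) := by
        refine intervalIntegral.integral_congr fun s hs =>
          intervalIntegral.integral_congr fun y hy => ?_
        exact ((fderiv_pullback_sub_fderiv_pullback
          ((hω (s, y) ⟨hs, hy⟩).differentiableAt one_ne_zero) (hΦ (s, y) ⟨hs, hy⟩) _ _).symm.trans
          (sub_eq_add_neg _ _))
    _ = _ := by
        rw [green, intervalIntegral.integral_neg, intervalIntegral.integral_neg]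
        abel

end Stokes

section PartialDerivatives

theorem hasDerivAt_slice_fst {E : Type*} [NormedAddCommGroup E] [NormedSpace ℝ E] {g : ℝ × ℝ → E}
    {t x : ℝ} (hg : DifferentiableAt ℝ g (t, x)) :
    HasDerivAt (fun τ => g (τ, x)) (fderiv ℝ g (t, x) (1, 0)) t :=
  hg.hasFDerivAt.comp_hasDerivAt t ((hasDerivAt_id t).prodMk (hasDerivAt_const t x))

theorem hasDerivAt_slice_snd {E : Type*} [NormedAddCommGroup E] [NormedSpace ℝ E] {g : ℝ × ℝ → E}
    {t x : ℝ} (hg : DifferentiableAt ℝ g (t, x)) :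
    HasDerivAt (fun y => g (t, y)) (fderiv ℝ g (t, x) (0, 1)) x :=
  hg.hasFDerivAt.comp_hasDerivAt x ((hasDerivAt_const x t).prodMk (hasDerivAt_id x))

variable {v : ℝ → ℝ → ℝ} {t x : ℝ}

theorem hasDerivAt_Dt (hv : DifferentiableAt ℝ (uncurry v) (t, x)) :
    HasDerivAt (fun τ => v τ x) (Dt v t x) t :=
  (hasDerivAt_slice_fst hv).differentiableAt.hasDerivAt

theorem hasDerivAt_Dx (hv : DifferentiableAt ℝ (uncurry v) (t, x)) :
    HasDerivAt (fun y => v t y) (Dx v t x) x :=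
  (hasDerivAt_slice_snd hv).differentiableAt.hasDerivAt

theorem Dt_eq_fderiv (hv : DifferentiableAt ℝ (uncurry v) (t, x)) :
    Dt v t x = fderiv ℝ (uncurry v) (t, x) (1, 0) :=
  (hasDerivAt_slice_fst hv).deriv

theorem Dx_eq_fderiv (hv : DifferentiableAt ℝ (uncurry v) (t, x)) :
    Dx v t x = fderiv ℝ (uncurry v) (t, x) (0, 1) :=
  (hasDerivAt_slice_snd hv).deriv

theorem fderiv_uncurry_apply (hv : DifferentiableAt ℝ (uncurry v) (t, x)) (h : ℝ × ℝ) :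
    fderiv ℝ (uncurry v) (t, x) h = h.1 * Dt v t x + h.2 * Dx v t x := by
  rw [Dt_eq_fderiv hv, Dx_eq_fderiv hv, ← smul_eq_mul, ← smul_eq_mul, ← map_smul, ← map_smul,
    ← map_add]
  simp

variable {n : WithTop ℕ∞} {p : ℝ × ℝ}

theorem eventually_differentiableAt (hv : ContDiffAt ℝ (n + 1) (uncurry v) p) :
    ∀ᶠ q in nhds p, DifferentiableAt ℝ (uncurry v) q :=
  ((hv.of_le le_add_self).eventually (by simp)).mono fun _ hq => hq.differentiableAt one_ne_zero

theorem uncurry_Dt_eventuallyEq (hv : ContDiffAt ℝ (n + 1) (uncurry v) p) :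
    uncurry (Dt v) =ᶠ[nhds p] fun q => fderiv ℝ (uncurry v) q (1, 0) :=
  (eventually_differentiableAt hv).mono fun _ => Dt_eq_fderiv

theorem uncurry_Dx_eventuallyEq (hv : ContDiffAt ℝ (n + 1) (uncurry v) p) :
    uncurry (Dx v) =ᶠ[nhds p] fun q => fderiv ℝ (uncurry v) q (0, 1) :=
  (eventually_differentiableAt hv).mono fun _ => Dx_eq_fderiv

theorem contDiffAt_Dt (hv : ContDiffAt ℝ (n + 1) (uncurry v) p) :
    ContDiffAt ℝ n (uncurry (Dt v)) p :=
  (hv.fderiv_right_succ.clm_apply contDiffAt_const).congr_of_eventuallyEq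
    (uncurry_Dt_eventuallyEq hv)

theorem contDiffAt_Dx (hv : ContDiffAt ℝ (n + 1) (uncurry v) p) :
    ContDiffAt ℝ n (uncurry (Dx v)) p :=
  (hv.fderiv_right_succ.clm_apply contDiffAt_const).congr_of_eventuallyEq
    (uncurry_Dx_eventuallyEq hv)

theorem Dx_Dt_eq_Dt_Dx (hv : ContDiffAt ℝ 2 (uncurry v) (t, x)) :
    Dx (Dt v) t x = Dt (Dx v) t x := by
  have hv' : ContDiffAt ℝ (1 + 1) (uncurry v) (t, x) := by rwa [one_add_one_eq_two]
  have hD : DifferentiableAt ℝ (fderiv ℝ (uncurry v)) (t, x) :=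
    hv'.fderiv_right_succ.differentiableAt one_ne_zero
  rw [Dx_eq_fderiv ((contDiffAt_Dt hv').differentiableAt one_ne_zero),
    Dt_eq_fderiv ((contDiffAt_Dx hv').differentiableAt one_ne_zero),
    (uncurry_Dt_eventuallyEq hv').fderiv_eq, (uncurry_Dx_eventuallyEq hv').fderiv_eq,
    fderiv_clm_apply hD (by fun_prop), fderiv_clm_apply hD (by fun_prop)]
  simpa using hv.isSymmSndFDerivAt (by simp) (0, 1) (1, 0)

end PartialDerivatives

section EnergyCurrent

/-- The energy density `(∂_t u)² + (∂_x u)² + c²u²` of the Klein–Gordon equation. -/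
noncomputable def energyDensity (c : ℝ) (u : ℝ → ℝ → ℝ) : ℝ → ℝ → ℝ :=
  fun t x => Dt u t x ^ 2 + Dx u t x ^ 2 + c ^ 2 * u t x ^ 2

/-- The momentum density `2 ∂_t u ∂_x u`, the flux associated with `energyDensity`. -/
noncomputable def momentumDensity (u : ℝ → ℝ → ℝ) : ℝ → ℝ → ℝ :=
  fun t x => 2 * Dt u t x * Dx u t x

/-- The energy current of the Klein–Gordon equation, encoded as the one-form
`2 ∂_t u ∂_x u dt + ((∂_t u)² + (∂_x u)² + c²u²) dx`, whose integral over a curve is the energy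
flux through it. -/
noncomputable def energyForm (c : ℝ) (u : ℝ → ℝ → ℝ) (p : ℝ × ℝ) : ℝ × ℝ →L[ℝ] ℝ :=
  uncurry (momentumDensity u) p • ContinuousLinearMap.fst ℝ ℝ ℝ
    + uncurry (energyDensity c u) p • ContinuousLinearMap.snd ℝ ℝ ℝ

variable {c t x : ℝ} {u : ℝ → ℝ → ℝ} {p : ℝ × ℝ}

theorem energyForm_apply (v : ℝ × ℝ) :
    energyForm c u (t, x) v = momentumDensity u t x * v.1 + energyDensity c u t x * v.2 := by
  simp [energyForm]

theorem contDiffAt_uncurry_energyDensity (hu : ContDiffAt ℝ 2 (uncurry u) p) :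
    ContDiffAt ℝ 1 (uncurry (energyDensity c u)) p :=
  (((contDiffAt_Dt hu).pow 2).add ((contDiffAt_Dx hu).pow 2)).add
    (contDiffAt_const.mul ((hu.of_le one_le_two).pow 2))

theorem contDiffAt_uncurry_momentumDensity (hu : ContDiffAt ℝ 2 (uncurry u) p) :
    ContDiffAt ℝ 1 (uncurry (momentumDensity u)) p :=
  (contDiffAt_const.mul (contDiffAt_Dt hu)).mul (contDiffAt_Dx hu)

theorem contDiffAt_energyForm (hu : ContDiffAt ℝ 2 (uncurry u) p) :
    ContDiffAt ℝ 1 (energyForm c u) p :=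
  ((contDiffAt_uncurry_momentumDensity hu).smul contDiffAt_const).add
    ((contDiffAt_uncurry_energyDensity hu).smul contDiffAt_const)

theorem Dt_energyDensity_sub_Dx_momentumDensity (hu : ContDiffAt ℝ 2 (uncurry u) (t, x)) :
    Dt (energyDensity c u) t x - Dx (momentumDensity u) t x
      = 2 * Dt u t x * (Box u t x + c ^ 2 * u t x) := by
  have hu₀ := hu.differentiableAt two_ne_zero
  have hut := (contDiffAt_Dt (n := 1) hu).differentiableAt one_ne_zero
  have hux := (contDiffAt_Dx (n := 1) hu).differentiableAt one_ne_zero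
  have hDt : Dt (energyDensity c u) t x = _ :=
    ((((hasDerivAt_Dt hut).fun_pow 2).fun_add ((hasDerivAt_Dt hux).fun_pow 2)).fun_add
      (((hasDerivAt_Dt hu₀).fun_pow 2).const_mul (c ^ 2))).deriv
  have hDx : Dx (momentumDensity u) t x = _ :=
    (((hasDerivAt_Dx hut).const_mul 2).fun_mul (hasDerivAt_Dx hux)).deriv
  rw [hDt, hDx, Dx_Dt_eq_Dt_Dx hu, Box]
  push_cast
  ring

theorem fderiv_energyForm_sub_fderiv_energyForm (hu : ContDiffAt ℝ 2 (uncurry u) (t, x))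
    (v w : ℝ × ℝ) :
    fderiv ℝ (energyForm c u) (t, x) v w - fderiv ℝ (energyForm c u) (t, x) w v
      = (v.1 * w.2 - v.2 * w.1) * (2 * Dt u t x * (Box u t x + c ^ 2 * u t x)) := by
  have hm := (contDiffAt_uncurry_momentumDensity hu).differentiableAt one_ne_zero
  have he := (contDiffAt_uncurry_energyDensity (c := c) hu).differentiableAt one_ne_zero
  have hderiv : HasFDerivAt (energyForm c u) _ (t, x) :=
    (hm.hasFDerivAt.smul_const (ContinuousLinearMap.fst ℝ ℝ ℝ)).add
      (he.hasFDerivAt.smul_const (ContinuousLinearMap.snd ℝ ℝ ℝ))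
  rw [hderiv.fderiv, ← Dt_energyDensity_sub_Dx_momentumDensity hu]
  simp only [add_apply, ContinuousLinearMap.smulRight_apply,
    smul_apply, ContinuousLinearMap.coe_fst', ContinuousLinearMap.coe_snd',
    smul_eq_mul, fderiv_uncurry_apply hm, fderiv_uncurry_apply he]
  ring

end EnergyCurrent

section Hyperboloids

/-- The region `R` inside the cone `{t = |x| + 1}`, between the hyperboloids of radii `s₀`
and `s₁`; in particular `hypRegion s s` is the truncated hyperboloid `H*_s`. -/
def hypRegion (s₀ s₁ : ℝ) : Set (ℝ × ℝ) :=
  {p | |p.2| ≤ p.1 - 1 ∧ s₀ ^ 2 ≤ p.1 ^ 2 - p.2 ^ 2 ∧ p.1 ^ 2 - p.2 ^ 2 ≤ s₁ ^ 2}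

/-- The integral of `g` over the truncated hyperboloid `H*_s`, with respect to `dx`. -/
noncomputable def hypIntegral (g : ℝ → ℝ → ℝ) (s : ℝ) : ℝ :=
  ∫ x in (-((s ^ 2 - 1) / 2))..((s ^ 2 - 1) / 2), g √(s ^ 2 + x ^ 2) x

/-- The coordinates `(s, y) ↦ (√(s² + x²), x)`, `x = (s² - 1)/2 · y`, on the interior of the
light cone. The abscissa is rescaled so that the rectangle `[s₀, s₁] × [-1, 1]` is mapped to
`hypRegion s₀ s₁` and its sides `y = ±1` to the cone `{t = |x| + 1}`. -/
noncomputable def hypChart (z : ℝ × ℝ) : ℝ × ℝ :=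
  (√(z.1 ^ 2 + ((z.1 ^ 2 - 1) / 2 * z.2) ^ 2), (z.1 ^ 2 - 1) / 2 * z.2)

variable {s₀ s₁ s x y : ℝ} {g h : ℝ → ℝ → ℝ}

theorem pos_of_mem_hypRegion {p : ℝ × ℝ} (hp : p ∈ hypRegion s₀ s₁) : 0 < p.1 := by
  linarith [hp.1, abs_nonneg p.2]

theorem hypRegion_mono {a₀ a₁ : ℝ} (ha₀ : 0 ≤ a₀) (h₀ : a₀ ≤ s₀) (hs₁ : 0 ≤ s₁) (h₁ : s₁ ≤ a₁) :
    hypRegion s₀ s₁ ⊆ hypRegion a₀ a₁ :=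
  fun _ hp => ⟨hp.1, (pow_le_pow_left₀ ha₀ h₀ 2).trans hp.2.1,
    hp.2.2.trans (pow_le_pow_left₀ hs₁ h₁ 2)⟩

theorem hypRegion_self_subset (hs₀ : 0 ≤ s₀) (hs : s ∈ Icc s₀ s₁) :
    hypRegion s s ⊆ hypRegion s₀ s₁ :=
  hypRegion_mono hs₀ hs.1 (hs₀.trans hs.1) hs.2

theorem hyperboloid_mem_hypRegion (hx : |x| ≤ (s ^ 2 - 1) / 2) :
    (√(s ^ 2 + x ^ 2), x) ∈ hypRegion s s := by
  have hsq : √(s ^ 2 + x ^ 2) ^ 2 - x ^ 2 = s ^ 2 := by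
    rw [Real.sq_sqrt (by positivity), add_sub_cancel_right]
  refine ⟨le_sub_iff_add_le.2 (Real.le_sqrt_of_sq_le ?_), hsq.ge, hsq.le⟩
  rw [add_sq, sq_abs]
  linarith

theorem half_sq_sub_one_nonneg (hs : 1 ≤ s) : 0 ≤ (s ^ 2 - 1) / 2 := by
  linarith [one_le_pow₀ hs (n := 2)]

theorem continuousOn_hyperboloid (hg : ContinuousOn (uncurry g) (hypRegion s s)) :
    ContinuousOn (fun x => g √(s ^ 2 + x ^ 2) x) (Icc (-((s ^ 2 - 1) / 2)) ((s ^ 2 - 1) / 2)) :=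
  hg.comp (f := fun x => (√(s ^ 2 + x ^ 2), x)) (by fun_prop)
    fun _ hx => hyperboloid_mem_hypRegion (abs_le.2 hx)

theorem hypIntegral_congr (hs : 1 ≤ s) (hgh : ∀ p ∈ hypRegion s s, g p.1 p.2 = h p.1 p.2) :
    hypIntegral g s = hypIntegral h s := by
  refine intervalIntegral.integral_congr fun x hx => hgh _ (hyperboloid_mem_hypRegion ?_)
  rw [uIcc_of_le (neg_le_self (half_sq_sub_one_nonneg hs))] at hx
  exact abs_le.2 hx

theorem hypIntegral_mono (hs : 1 ≤ s) (hg : ContinuousOn (uncurry g) (hypRegion s s))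
    (hh : ContinuousOn (uncurry h) (hypRegion s s))
    (hgh : ∀ p ∈ hypRegion s s, g p.1 p.2 ≤ h p.1 p.2) : hypIntegral g s ≤ hypIntegral h s :=
  have hA := neg_le_self (half_sq_sub_one_nonneg hs)
  intervalIntegral.integral_mono_on hA
    ((continuousOn_hyperboloid hg).intervalIntegrable_of_Icc hA)
    ((continuousOn_hyperboloid hh).intervalIntegrable_of_Icc hA)
    fun _ hx => hgh _ (hyperboloid_mem_hypRegion (abs_le.2 hx))

theorem hypIntegral_mul_le_sqrt_mul_sqrt (hs : 1 ≤ s)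
    (hg : ContinuousOn (uncurry g) (hypRegion s s))
    (hh : ContinuousOn (uncurry h) (hypRegion s s)) :
    hypIntegral (fun t x => g t x * h t x) s
      ≤ √(hypIntegral (fun t x => g t x ^ 2) s) * √(hypIntegral (fun t x => h t x ^ 2) s) :=
  intervalIntegral_mul_le_sqrt_mul_sqrt (neg_le_self (half_sq_sub_one_nonneg hs))
    (continuousOn_hyperboloid hg) (continuousOn_hyperboloid hh)

theorem hypChart_mem_hypRegion (hs₀ : 1 ≤ s₀) {z : ℝ × ℝ} (hz : z ∈ Icc s₀ s₁ ×ˢ Icc (-1) 1) :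
    hypChart z ∈ hypRegion s₀ s₁ := by
  have hA := half_sq_sub_one_nonneg (hs₀.trans hz.1.1)
  refine hypRegion_self_subset (zero_le_one.trans hs₀) hz.1 (hyperboloid_mem_hypRegion ?_)
  rw [abs_mul, abs_of_nonneg hA]
  exact mul_le_of_le_one_right hA (abs_le.2 hz.2)

theorem hypIntegral_eq_integral_hypChart :
    hypIntegral g s = ∫ y in (-1)..1, (s ^ 2 - 1) / 2 * uncurry g (hypChart (s, y)) := by
  have h := intervalIntegral.mul_integral_comp_mul_left (a := -1) (b := 1)
    (f := fun x => g √(s ^ 2 + x ^ 2) x) (c := (s ^ 2 - 1) / 2)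
  rw [mul_neg, mul_one] at h
  rw [intervalIntegral.integral_const_mul]
  exact h.symm

theorem continuous_hypChart : Continuous hypChart := by
  unfold hypChart
  fun_prop

theorem continuousOn_hypIntegral (hs₀ : 1 ≤ s₀)
    (hg : ContinuousOn (uncurry g) (hypRegion s₀ s₁)) :
    ContinuousOn (hypIntegral g) (Icc s₀ s₁) := by
  simp only [funext fun s => hypIntegral_eq_integral_hypChart (g := g) (s := s)]
  refine continuousOn_intervalIntegral ?_
  rw [uIcc_of_le (by norm_num)]
  exact (by fun_prop : Continuous fun z : ℝ × ℝ => (z.1 ^ 2 - 1) / 2).continuousOn.mul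
    (hg.comp continuous_hypChart.continuousOn fun z hz => hypChart_mem_hypRegion hs₀ hz)

theorem hypChart_fst_pos (hs : s ≠ 0) : 0 < (hypChart (s, y)).1 :=
  Real.sqrt_pos.2 (by positivity)

theorem contDiffAt_hypChart {n : WithTop ℕ∞} (hs : s ≠ 0) : ContDiffAt ℝ n hypChart (s, y) := by
  have hrad : ContDiffAt ℝ n (fun z : ℝ × ℝ => z.1 ^ 2 + ((z.1 ^ 2 - 1) / 2 * z.2) ^ 2) (s, y) := by
    fun_prop
  exact (hrad.sqrt (Real.sqrt_pos.1 (hypChart_fst_pos hs)).ne').prodMk (by fun_prop)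

theorem fderiv_hypChart_one_zero (hs : s ≠ 0) :
    fderiv ℝ hypChart (s, y) (1, 0)
      = (s * (1 + (hypChart (s, y)).2 * y) / (hypChart (s, y)).1, s * y) := by
  have hX : HasDerivAt (fun τ : ℝ => (τ ^ 2 - 1) / 2 * y) (s * y) s :=
    (((((hasDerivAt_id s).fun_pow 2).sub_const 1).div_const 2).mul_const y).congr_deriv
      (by simp)
  have hT : HasDerivAt (fun τ : ℝ => √(τ ^ 2 + ((τ ^ 2 - 1) / 2 * y) ^ 2))
      (s * (1 + (hypChart (s, y)).2 * y) / (hypChart (s, y)).1) s :=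
    ((((hasDerivAt_id s).fun_pow 2).fun_add (hX.fun_pow 2)).sqrt (by positivity)).congr_deriv <| by
      simp only [Nat.cast_ofNat, id_eq, Nat.add_one_sub_one, pow_one, mul_one, hypChart]
      field_simp
  exact (hasDerivAt_slice_fst ((contDiffAt_hypChart hs).differentiableAt one_ne_zero)).unique
    (hT.prodMk hX)

theorem fderiv_hypChart_zero_one (hs : s ≠ 0) :
    fderiv ℝ hypChart (s, y) (0, 1)
      = ((hypChart (s, y)).2 * ((s ^ 2 - 1) / 2) / (hypChart (s, y)).1, (s ^ 2 - 1) / 2) := by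
  have hX : HasDerivAt (fun y : ℝ => (s ^ 2 - 1) / 2 * y) ((s ^ 2 - 1) / 2) y := by
    simpa using (hasDerivAt_id y).const_mul ((s ^ 2 - 1) / 2)
  have hT : HasDerivAt (fun y : ℝ => √(s ^ 2 + ((s ^ 2 - 1) / 2 * y) ^ 2))
      ((hypChart (s, y)).2 * ((s ^ 2 - 1) / 2) / (hypChart (s, y)).1) y :=
    (((hX.fun_pow 2).const_add (s ^ 2)).sqrt (by positivity)).congr_deriv <| by
      simp only [Nat.cast_ofNat, Nat.add_one_sub_one, pow_one, hypChart]
      field_simp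
  exact (hasDerivAt_slice_snd ((contDiffAt_hypChart hs).differentiableAt one_ne_zero)).unique
    (hT.prodMk hX)

theorem hypChart_of_sq_eq_one (hy : y ^ 2 = 1) :
    hypChart (s, y) = ((s ^ 2 + 1) / 2, ((s ^ 2 + 1) / 2 - 1) * y) := by
  have hsq : s ^ 2 + ((s ^ 2 - 1) / 2 * y) ^ 2 = ((s ^ 2 + 1) / 2) ^ 2 := by
    rw [mul_pow, hy]
    ring
  ext
  · simp only [hypChart, hsq]
    exact Real.sqrt_sq (by positivity)
  · simp only [hypChart]
    ring

theorem fderiv_hypChart_one_zero_of_sq_eq_one (hs : s ≠ 0) (hy : y ^ 2 = 1) :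
    fderiv ℝ hypChart (s, y) (1, 0) = (s, s * y) := by
  rw [fderiv_hypChart_one_zero hs, hypChart_of_sq_eq_one hy, mul_assoc, ← sq, hy]
  congr 1
  field_simp
  ring

end Hyperboloids

section EnergyIdentity

/-- The energy density `(∂_t u)² + (∂_x u)² + 2 (x/t) ∂_t u ∂_x u + c²u²` of the hyperboloids. -/
noncomputable def hypEnergyDensity (c : ℝ) (u : ℝ → ℝ → ℝ) : ℝ → ℝ → ℝ :=
  fun t x => Dt u t x ^ 2 + Dx u t x ^ 2 + 2 * (x / t) * Dt u t x * Dx u t x + c ^ 2 * u t x ^ 2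

variable {c s₀ s₁ s y : ℝ} {u : ℝ → ℝ → ℝ}

theorem hypEnergy_eq_hypIntegral : hypEnergy c u = hypIntegral (hypEnergyDensity c u) :=
  rfl

theorem energyForm_hypChart_zero_one (hs : s ≠ 0) :
    energyForm c u (hypChart (s, y)) (fderiv ℝ hypChart (s, y) (0, 1))
      = (s ^ 2 - 1) / 2 * uncurry (hypEnergyDensity c u) (hypChart (s, y)) := by
  rw [fderiv_hypChart_zero_one hs]
  generalize hypChart (s, y) = p
  obtain ⟨t, x⟩ := p
  simp only [energyForm_apply, energyDensity, momentumDensity, hypEnergyDensity, uncurry]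
  ring

theorem energyForm_hypChart_one (hs : 1 < s) :
    energyForm c u (hypChart (s, 1)) (fderiv ℝ hypChart (s, 1) (1, 0))
      = (Nd u ((s ^ 2 + 1) / 2) ((s ^ 2 + 1) / 2 - 1) ^ 2
          + c ^ 2 * u ((s ^ 2 + 1) / 2) ((s ^ 2 + 1) / 2 - 1) ^ 2) * s := by
  have hpos : 0 < (s ^ 2 + 1) / 2 - 1 := by nlinarith
  rw [fderiv_hypChart_one_zero_of_sq_eq_one (by linarith) (one_pow 2),
    hypChart_of_sq_eq_one (one_pow 2), mul_one, mul_one, energyForm_apply, Nd, abs_of_pos hpos,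
    div_self hpos.ne', energyDensity, momentumDensity]
  ring

theorem energyForm_hypChart_neg_one (hs : 1 < s) :
    energyForm c u (hypChart (s, -1)) (fderiv ℝ hypChart (s, -1) (1, 0))
      = -((Nd u ((s ^ 2 + 1) / 2) (-((s ^ 2 + 1) / 2 - 1)) ^ 2
          + c ^ 2 * u ((s ^ 2 + 1) / 2) (-((s ^ 2 + 1) / 2 - 1)) ^ 2) * s) := by
  have hpos : 0 < (s ^ 2 + 1) / 2 - 1 := by nlinarith
  rw [fderiv_hypChart_one_zero_of_sq_eq_one (by linarith) neg_one_sq,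
    hypChart_of_sq_eq_one neg_one_sq, mul_neg_one, mul_neg_one, energyForm_apply, Nd, abs_neg,
    abs_of_pos hpos, neg_div, div_self hpos.ne', energyDensity, momentumDensity]
  ring

theorem contDiffAt_energyForm_hypChart (hs₀ : 1 ≤ s₀)
    (hu : ∀ p ∈ hypRegion s₀ s₁, ContDiffAt ℝ 2 (uncurry u) p) {z : ℝ × ℝ}
    (hz : z ∈ Icc s₀ s₁ ×ˢ Icc (-1) 1) : ContDiffAt ℝ 1 (energyForm c u) (hypChart z) :=
  contDiffAt_energyForm (hu _ (hypChart_mem_hypRegion hs₀ hz))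

theorem coneFlux_eq_integral_energyForm (hs₀ : 1 ≤ s₀) (hs : s₀ ≤ s₁)
    (hu : ∀ p ∈ hypRegion s₀ s₁, ContDiffAt ℝ 2 (uncurry u) p) :
    coneFlux c u s₀ s₁
      = (∫ s in s₀..s₁, energyForm c u (hypChart (s, 1)) (fderiv ℝ hypChart (s, 1) (1, 0)))
        - ∫ s in s₀..s₁, energyForm c u (hypChart (s, -1)) (fderiv ℝ hypChart (s, -1) (1, 0)) := by
  have intervalIntegrable {y : ℝ} (hy : y ∈ Icc (-1) 1) : IntervalIntegrable
      (fun s => energyForm c u (hypChart (s, y)) (fderiv ℝ hypChart (s, y) (1, 0)))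
      volume s₀ s₁ := by
    refine ContinuousOn.intervalIntegrable_of_Icc hs fun s hs => ?_
    have hpull := contDiffAt_pullback (contDiffAt_energyForm_hypChart (c := c) hs₀ hu ⟨hs, hy⟩)
      (contDiffAt_hypChart (by linarith [hs.1])) (1, 0)
    exact (hpull.continuousAt.comp (f := fun s => (s, y)) (by fun_prop)).continuousWithinAt
  have hderiv (s : ℝ) : HasDerivAt (fun s : ℝ => (s ^ 2 + 1) / 2) s s :=
    ((((hasDerivAt_id s).fun_pow 2).add_const 1).div_const 2).congr_deriv (by simp)
  rw [← intervalIntegral.integral_sub (intervalIntegrable (by norm_num))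
    (intervalIntegrable (by norm_num)), coneFlux,
    ← intervalIntegral.integral_comp_mul_deriv_of_deriv_nonneg (by fun_prop)
      (fun s _ => hderiv s) fun s hs' => ?_]
  · refine intervalIntegral.integral_congr_Ioo_of_le hs fun s hs => ?_
    have hs1 : 1 < s := hs₀.trans_lt hs.1
    simp only [comp, energyForm_hypChart_one hs1, energyForm_hypChart_neg_one hs1]
    ring
  · rw [min_eq_left hs] at hs'
    linarith [hs'.1]

theorem fderiv_energyForm_hypChart (hs : s ≠ 0)
    (hu : ContDiffAt ℝ 2 (uncurry u) (hypChart (s, y))) :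
    fderiv ℝ (energyForm c u) (hypChart (s, y)) (fderiv ℝ hypChart (s, y) (1, 0))
          (fderiv ℝ hypChart (s, y) (0, 1))
        - fderiv ℝ (energyForm c u) (hypChart (s, y)) (fderiv ℝ hypChart (s, y) (0, 1))
          (fderiv ℝ hypChart (s, y) (1, 0))
      = 2 * s * ((s ^ 2 - 1) / 2 *
          uncurry (fun t x => Dt u t x / t * (Box u t x + c ^ 2 * u t x)) (hypChart (s, y))) := by
  have hT : (hypChart (s, y)).1 ≠ 0 := (hypChart_fst_pos hs).ne'
  rw [fderiv_hypChart_one_zero hs, fderiv_hypChart_zero_one hs]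
  generalize hypChart (s, y) = p at hT hu ⊢
  obtain ⟨t, x⟩ := p
  rw [fderiv_energyForm_sub_fderiv_energyForm hu, uncurry]
  field_simp
  ring

theorem integral_fderiv_energyForm_hypChart (hs : s ≠ 0)
    (hu : ∀ y ∈ [[(-1 : ℝ), 1]], ContDiffAt ℝ 2 (uncurry u) (hypChart (s, y))) :
    (∫ y in (-1)..1,
        (fderiv ℝ (energyForm c u) (hypChart (s, y)) (fderiv ℝ hypChart (s, y) (1, 0))
            (fderiv ℝ hypChart (s, y) (0, 1))
          - fderiv ℝ (energyForm c u) (hypChart (s, y)) (fderiv ℝ hypChart (s, y) (0, 1))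
            (fderiv ℝ hypChart (s, y) (1, 0))))
      = 2 * (s * hypIntegral (fun t x => Dt u t x / t * (Box u t x + c ^ 2 * u t x)) s) := by
  rw [← mul_assoc, hypIntegral_eq_integral_hypChart, ← intervalIntegral.integral_const_mul]
  exact intervalIntegral.integral_congr fun y hy => fderiv_energyForm_hypChart hs (hu y hy)

theorem hypEnergy_eq_add_coneFlux_add_integral (hs₀ : 1 ≤ s₀) (hs : s₀ ≤ s₁)
    (hu : ∀ p ∈ hypRegion s₀ s₁, ContDiffAt ℝ 2 (uncurry u) p) :
    hypEnergy c u s₁ = hypEnergy c u s₀ + coneFlux c u s₀ s₁ + 2 * ∫ s in s₀..s₁,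
      s * hypIntegral (fun t x => Dt u t x / t * (Box u t x + c ^ 2 * u t x)) s := by
  have hrect : [[s₀, s₁]] ×ˢ [[(-1 : ℝ), 1]] = Icc s₀ s₁ ×ˢ Icc (-1) 1 := by
    rw [uIcc_of_le hs, uIcc_of_le (by norm_num)]
  have ne_zero {s : ℝ} (h : s₀ ≤ s) : s ≠ 0 := by linarith
  have hypEnergy_eq {s : ℝ} (h : s₀ ≤ s) : hypEnergy c u s = ∫ y in (-1)..1,
      energyForm c u (hypChart (s, y)) (fderiv ℝ hypChart (s, y) (0, 1)) := by
    simp only [hypEnergy_eq_hypIntegral, hypIntegral_eq_integral_hypChart,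
      energyForm_hypChart_zero_one (ne_zero h)]
  have stokes := integral2_fderiv_pullback (ω := energyForm c u) (Φ := hypChart)
    (a₁ := s₀) (b₁ := s₁) (a₂ := -1) (b₂ := 1)
    (fun z hz => contDiffAt_energyForm_hypChart hs₀ hu (hrect ▸ hz))
    (fun z hz => contDiffAt_hypChart (ne_zero (hrect ▸ hz).1.1))
  rw [← coneFlux_eq_integral_energyForm hs₀ hs hu, ← hypEnergy_eq hs, ← hypEnergy_eq le_rfl]
    at stokes
  have source : ∀ s ∈ [[s₀, s₁]], _ := fun s hs' =>
    integral_fderiv_energyForm_hypChart (c := c) (ne_zero (uIcc_of_le hs ▸ hs').1)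
      fun y hy => hu _ (hypChart_mem_hypRegion hs₀ (hrect ▸ ⟨hs', hy⟩))
  rw [intervalIntegral.integral_congr source, intervalIntegral.integral_const_mul] at stokes
  linarith

end EnergyIdentity

section EnergyEstimate

variable {c s₀ s₁ s t x : ℝ} {u f : ℝ → ℝ → ℝ} {S : Set (ℝ × ℝ)}

theorem hypEnergyDensity_eq_sum_sq (ht : t ≠ 0) (hs : t ^ 2 - x ^ 2 = s ^ 2) :
    hypEnergyDensity c u t x
      = (s / t * Dt u t x) ^ 2 + (x / t * Dt u t x + Dx u t x) ^ 2 + (c * u t x) ^ 2 := by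
  have hst : (s / t) ^ 2 + (x / t) ^ 2 = 1 := by
    rw [div_pow, div_pow, ← add_div, ← hs, sub_add_cancel, div_self (pow_ne_zero 2 ht)]
  rw [hypEnergyDensity]
  linear_combination -Dt u t x ^ 2 * hst

theorem sq_mul_Dt_le_hypEnergyDensity (ht : t ≠ 0) (hs : t ^ 2 - x ^ 2 = s ^ 2) :
    (s / t * Dt u t x) ^ 2 ≤ hypEnergyDensity c u t x := by
  rw [hypEnergyDensity_eq_sum_sq ht hs, add_assoc]
  exact le_add_of_nonneg_right (by positivity)

theorem continuousOn_uncurry_Dt (hu : ∀ p ∈ S, ContDiffAt ℝ 1 (uncurry u) p) :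
    ContinuousOn (uncurry (Dt u)) S :=
  fun p hp => (contDiffAt_Dt (n := 0) (hu p hp)).continuousAt.continuousWithinAt

theorem continuousOn_uncurry_Dx (hu : ∀ p ∈ S, ContDiffAt ℝ 1 (uncurry u) p) :
    ContinuousOn (uncurry (Dx u)) S :=
  fun p hp => (contDiffAt_Dx (n := 0) (hu p hp)).continuousAt.continuousWithinAt

theorem continuousOn_uncurry_Box (hu : ∀ p ∈ S, ContDiffAt ℝ 2 (uncurry u) p) :
    ContinuousOn (uncurry (Box u)) S :=
  (continuousOn_uncurry_Dt fun p hp => contDiffAt_Dt (hu p hp)).sub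
    (continuousOn_uncurry_Dx fun p hp => contDiffAt_Dx (hu p hp))

theorem continuousOn_div_fst (hu : ContinuousOn (uncurry u) (hypRegion s₀ s₁)) :
    ContinuousOn (uncurry fun t x => u t x / t) (hypRegion s₀ s₁) :=
  hu.div continuousOn_fst fun _ hp => (pos_of_mem_hypRegion hp).ne'

theorem continuousOn_hypEnergyDensity
    (hu : ∀ p ∈ hypRegion s₀ s₁, ContDiffAt ℝ 1 (uncurry u) p) :
    ContinuousOn (uncurry (hypEnergyDensity c u)) (hypRegion s₀ s₁) := by
  have hDt := continuousOn_uncurry_Dt hu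
  have hDx := continuousOn_uncurry_Dx hu
  have hu₀ : ContinuousOn (uncurry u) (hypRegion s₀ s₁) :=
    fun p hp => (hu p hp).continuousAt.continuousWithinAt
  have hxt : ContinuousOn (fun p : ℝ × ℝ => p.2 / p.1) (hypRegion s₀ s₁) :=
    continuousOn_div_fst (u := fun _ x => x) continuousOn_snd
  exact (((hDt.pow 2).add (hDx.pow 2)).add (((hxt.const_mul 2).mul hDt).mul hDx)).add
    ((hu₀.pow 2).const_mul (c ^ 2))

theorem mul_hypIntegral_Dt_div_mul_le (hs : 1 ≤ s)
    (hu : ∀ p ∈ hypRegion s s, ContDiffAt ℝ 1 (uncurry u) p)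
    (hf : ContinuousOn (uncurry f) (hypRegion s s)) :
    s * hypIntegral (fun t x => Dt u t x / t * f t x) s
      ≤ √(hypEnergy c u s) * √(hypIntegral (fun t x => f t x ^ 2) s) := by
  have hDt : ContinuousOn (uncurry fun t x => s / t * Dt u t x) (hypRegion s s) :=
    (continuousOn_div_fst (u := fun _ _ => s) continuousOn_const).mul (continuousOn_uncurry_Dt hu)
  have coercive : hypIntegral (fun t x => (s / t * Dt u t x) ^ 2) s ≤ hypEnergy c u s := by
    refine hypIntegral_mono hs ?_ (continuousOn_hypEnergyDensity hu) fun p hp =>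
      sq_mul_Dt_le_hypEnergyDensity (pos_of_mem_hypRegion hp).ne' (le_antisymm hp.2.2 hp.2.1)
    exact hDt.pow 2
  calc s * hypIntegral (fun t x => Dt u t x / t * f t x) s
      = hypIntegral (fun t x => s / t * Dt u t x * f t x) s := by
        rw [hypIntegral, hypIntegral, ← intervalIntegral.integral_const_mul]
        congr! 2
        ring
    _ ≤ √(hypIntegral (fun t x => (s / t * Dt u t x) ^ 2) s)
          * √(hypIntegral (fun t x => f t x ^ 2) s) := hypIntegral_mul_le_sqrt_mul_sqrt hs hDt hf
    _ ≤ √(hypEnergy c u s) * √(hypIntegral (fun t x => f t x ^ 2) s) := by gcongr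

theorem stmt16_general (hs₀ : 1 ≤ s₀) (hs : s₀ ≤ s₁)
    (hu : ∀ p ∈ hypRegion s₀ s₁, ContDiffAt ℝ 2 (uncurry u) p)
    (heq : ∀ p ∈ hypRegion s₀ s₁, Box u p.1 p.2 + c ^ 2 * u p.1 p.2 = f p.1 p.2) :
    hypEnergy c u s₁ ≤ hypEnergy c u s₀ + coneFlux c u s₀ s₁
      + 2 * ∫ s in s₀..s₁, √(hypEnergy c u s) * √(hypIntegral (fun t x => f t x ^ 2) s) := by
  have hu₁ : ∀ p ∈ hypRegion s₀ s₁, ContDiffAt ℝ 1 (uncurry u) p :=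
    fun p hp => (hu p hp).of_le one_le_two
  have hf : ContinuousOn (uncurry f) (hypRegion s₀ s₁) :=
    ((continuousOn_uncurry_Box hu).add (ContinuousOn.const_mul
      (fun p hp => (hu p hp).continuousAt.continuousWithinAt) (c ^ 2))).congr
      fun p hp => (heq p hp).symm
  have hf_sq : ContinuousOn (uncurry fun t x => f t x ^ 2) (hypRegion s₀ s₁) := hf.pow 2
  have slice_subset {s : ℝ} (h : s ∈ Icc s₀ s₁) : hypRegion s s ⊆ hypRegion s₀ s₁ :=
    hypRegion_self_subset (zero_le_one.trans hs₀) h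
  have source_eq : ∀ s ∈ [[s₀, s₁]],
      s * hypIntegral (fun t x => Dt u t x / t * (Box u t x + c ^ 2 * u t x)) s
        = s * hypIntegral (fun t x => Dt u t x / t * f t x) s := fun s h => by
    rw [uIcc_of_le hs] at h
    exact congrArg (s * ·) (hypIntegral_congr (hs₀.trans h.1) fun p hp =>
      congrArg (Dt u p.1 p.2 / p.1 * ·) (heq p (slice_subset h hp)))
  rw [hypEnergy_eq_add_coneFlux_add_integral hs₀ hs hu, intervalIntegral.integral_congr source_eq]
  gcongr
  refine intervalIntegral.integral_mono_on hs
    (ContinuousOn.intervalIntegrable_of_Icc hs ?_) (ContinuousOn.intervalIntegrable_of_Icc hs ?_)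
    fun s h => mul_hypIntegral_Dt_div_mul_le (hs₀.trans h.1)
      (fun p hp => hu₁ p (slice_subset h hp)) (hf.mono (slice_subset h))
  · exact continuousOn_id.mul (continuousOn_hypIntegral hs₀
      ((continuousOn_div_fst (continuousOn_uncurry_Dt hu₁)).mul hf))
  · exact (continuousOn_hypIntegral hs₀ (continuousOn_hypEnergyDensity hu₁)).sqrt.mul
      (continuousOn_hypIntegral hs₀ hf_sq).sqrt

end EnergyEstimate

/-- energy estimate in the interior (hyperboloidal) region: if
`□u + c²u = f` on `R = {|x| ≤ t−1, s₀² ≤ t²−x² ≤ s₁²}`, then for `s ∈ [s₀,s₁]`,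
`E(s) ≤ E(s₀) + K(s) + 2∫_{s₀}^s E(τ)^{1/2}‖f‖_{L²(H_τ)} dτ`. -/
theorem stmt16 (s₀ s₁ c : ℝ) (hs₀ : 2 ≤ s₀) (hss : s₀ ≤ s₁) (hc : 0 ≤ c)
    (u f : ℝ → ℝ → ℝ) (U : Set (ℝ × ℝ)) (hU : IsOpen U)
    (hRU : {p : ℝ × ℝ | |p.2| ≤ p.1 - 1 ∧ s₀^2 ≤ p.1^2 - p.2^2 ∧ p.1^2 - p.2^2 ≤ s₁^2} ⊆ U)
    (hu : ContDiffOn ℝ 2 (fun p : ℝ × ℝ => u p.1 p.2) U)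
    (hf : ContinuousOn (fun p : ℝ × ℝ => f p.1 p.2)
      {p : ℝ × ℝ | |p.2| ≤ p.1 - 1 ∧ s₀^2 ≤ p.1^2 - p.2^2 ∧ p.1^2 - p.2^2 ≤ s₁^2})
    (heq : ∀ p ∈ {p : ℝ × ℝ | |p.2| ≤ p.1 - 1 ∧ s₀^2 ≤ p.1^2 - p.2^2 ∧ p.1^2 - p.2^2 ≤ s₁^2},
      Box u p.1 p.2 + c^2 * u p.1 p.2 = f p.1 p.2) :
    ∀ s : ℝ, s₀ ≤ s → s ≤ s₁ →
      hypEnergy c u s ≤ hypEnergy c u s₀ + coneFlux c u s₀ s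
        + 2 * ∫ τ in s₀..s, Real.sqrt (hypEnergy c u τ) *
            Real.sqrt (∫ x in (-((τ^2 - 1)/2))..((τ^2 - 1)/2),
              (f (Real.sqrt (τ^2 + x^2)) x)^2) := by
  intro s h₀ h₁
  have hsub := hypRegion_mono (s₀ := s₀) (by linarith) le_rfl (by linarith) h₁
  exact stmt16_general (by linarith) h₀
    (fun p hp => hu.contDiffAt (hU.mem_nhds (hRU (hsub hp)))) fun p hp => heq p (hsub hp)
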